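/- arXiv:2110.03436 — 3 statements merged into one kernel-verified Lean document; each statement's English description precedes it below -/
import Mathlib

section
/- Let $T$ on $\ell^2$ be given by $T(x_1,x_2,\dots)=(0,\alpha x_1,x_2,x_3,\dots)$ with $\alpha\in(0,1)$, and set $S_1 = (n-2)I + 2T$, $S_{n-1} = 2T + (n-2)T^2$, $P = T^2$ for some integer $n \ge 3$. Then $S_1^* P \ne P S_1^*$. -/
open ContinuousLinearMap

local notation "ℓ²" => lp (fun _ : ℕ => ℂ) 2

/-- Let `T` on `ℓ²` be `T(x₁,x₂,…) = (0, αx₁, x₂, x₃, …)` with `α ∈ (0,1)`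
(coordinates indexed from `0`), and set `S₁ = (n-2)I + 2T` and `P = T²` for an integer
`n ≥ 3`.  Then `S₁* P ≠ P S₁*`. -/
theorem stmt11 (α : ℝ) (hα : 0 < α) (hα1 : α < 1)
    (T : ℓ² →L[ℂ] ℓ²)
    (hT : ∀ x : ℓ², (T x) 0 = 0 ∧ (T x) 1 = (α : ℂ) * x 0 ∧ ∀ k : ℕ, (T x) (k + 2) = x (k + 1))
    (n : ℕ) (hn : 3 ≤ n)
    (S₁ : ℓ² →L[ℂ] ℓ²) (hS₁ : S₁ = ((n : ℂ) - 2) • (1 : ℓ² →L[ℂ] ℓ²) + (2 : ℂ) • T)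
    (P : ℓ² →L[ℂ] ℓ²) (hP : P = T * T) :
    adjoint S₁ * P ≠ P * adjoint S₁ := by
  intro h
  set e : ℓ² := lp.single 2 0 (1 : ℂ) with he
  have he0 : e 0 = 1 := by simp [he]
  have hTe : adjoint T e = 0 := by
    apply ext_inner_right ℂ
    intro v
    rw [adjoint_inner_left, inner_zero_left, he, lp.inner_single_left, (hT v).1, inner_zero_right]
  have hS : ∀ v, adjoint S₁ v = (starRingEnd ℂ ((n : ℂ) - 2)) • v + (2 : ℂ) • adjoint T v := by
    intro v
    apply ext_inner_right ℂ
    intro w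
    rw [adjoint_inner_left, hS₁, inner_add_left, inner_smul_left, inner_smul_left,
      adjoint_inner_left]
    simp [inner_add_right, inner_smul_right]
    exact Or.inl (Complex.conj_ofNat 2).symm
  have h1 := congrArg (fun A : ℓ² →L[ℂ] ℓ² => A e) h
  simp only [mul_apply_eq_comp, hS, hTe, hP, smul_zero, add_zero, map_smul] at h1
  have h2 : adjoint T (T (T e)) = 0 := by
    simpa using h1
  have h3 : inner ℂ (T (T e)) (T (T e)) = 0 := by
    rw [← adjoint_inner_left, h2, inner_zero_left]
  rw [inner_self_eq_zero] at h3
  have h4 := (hT (T e)).2.2 0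
  rw [h3] at h4
  have h5 := (hT e).2.1
  rw [he0] at h5
  simp only [zero_add] at h4
  rw [h5] at h4
  simp at h4
  exact hα.ne (by exact_mod_cast h4)
end

section
/- Let $T$ on $\ell^2$ be given by $T(x_1,x_2,\dots)=(0,\alpha x_1,x_2,\dots)$, $\alpha\in(0,1)$, $P=T^2$, $S_1=(n-2)I+2T$, $S_{n-1}=2T+(n-2)T^2$ for an integer $n\ge 3$. Define $B_1(x_1,x_2,x_3,\dots) = ((n-2)x_1 + 2\alpha x_2,\ (n-2)x_2 + 2\sqrt{1-\alpha^2}x_3,\ (n-2)x_3,\ 0,0,\dots)$ and $B_{n-1}(x_1,x_2,x_3,\dots) = (2\alpha x_2,\ 2\sqrt{1-\alpha^2}x_3,\ 0,0,\dots)$. Then $S_1^* - S_{n-1}P^* = D_{P^*}B_1 D_{P^*}$ and $S_{n-1}^* - S_1 P^* = D_{P^*}B_{n-1}D_{P^*}$. -/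
open ContinuousLinearMap

local notation "ℓ²" => lp (fun _ : ℕ => ℂ) 2

theorem aux_sqrt_eig {H : Type*} [NormedAddCommGroup H] [InnerProductSpace ℂ H] [CompleteSpace H]
    (D : H →L[ℂ] H) (hD : D.IsPositive) (s : ℝ) (hs : 0 ≤ s) (e : H)
    (h : D (D e) = ((s : ℂ) ^ 2) • e) : D e = (s : ℂ) • e := by
  have hsym : ∀ x y, inner ℂ (D x) y = inner ℂ x (D y) := fun x y => hD.isSymmetric x y
  rcases hs.eq_or_lt with h0 | h0
  · subst h0
    have h1 : inner ℂ (D e) (D e) = 0 := by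
      rw [hsym, h]; simp
    simpa using h1
  · have hy : D (D e - (s : ℂ) • e) = (-(s : ℂ)) • (D e - (s : ℂ) • e) := by
      rw [map_sub, map_smul, h, smul_sub, smul_smul]
      module
    have hp := hD.re_inner_nonneg_left (D e - (s : ℂ) • e)
    have hn : inner ℂ (D e - (s : ℂ) • e) (D e - (s : ℂ) • e)
        = ((‖D e - (s : ℂ) • e‖ ^ 2 : ℝ) : ℂ) := by
      rw [inner_self_eq_norm_sq_to_K]; push_cast; rfl
    have hc : (starRingEnd ℂ) (-(s : ℂ)) * ((‖D e - (s : ℂ) • e‖ ^ 2 : ℝ) : ℂ)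
          = ((-(s * ‖D e - (s : ℂ) • e‖ ^ 2) : ℝ) : ℂ) := by
        simp
    rw [hy, inner_smul_left, hn, hc] at hp
    have hp' : 0 ≤ -(s * ‖D e - (s : ℂ) • e‖ ^ 2) := hp
    have h2 : ‖D e - (s : ℂ) • e‖ ^ 2 = 0 := by
      have := sq_nonneg ‖D e - (s : ℂ) • e‖
      nlinarith
    have h3 : ‖D e - (s : ℂ) • e‖ = 0 := by simpa using h2
    exact sub_eq_zero.mp (norm_eq_zero.mp h3)

theorem aux_coord (x : lp (fun _ : ℕ => ℂ) 2) (k : ℕ) :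
    inner ℂ (lp.single 2 k (1 : ℂ) : lp (fun _ : ℕ => ℂ) 2) x = x k := by
  rw [lp.inner_single_left]; simp

theorem aux_single (k j : ℕ) :
    (lp.single 2 k (1 : ℂ) : lp (fun _ : ℕ => ℂ) 2) j = if j = k then 1 else 0 := by
  rw [lp.coeFn_single, Pi.single_apply]

theorem aux_add (x y : lp (fun _ : ℕ => ℂ) 2) (k : ℕ) : (x + y) k = x k + y k := rfl

theorem aux_sub (x y : lp (fun _ : ℕ => ℂ) 2) (k : ℕ) : (x - y) k = x k - y k := rfl

theorem aux_smul (c : ℂ) (x : lp (fun _ : ℕ => ℂ) 2) (k : ℕ) : (c • x) k = c * x k := rfl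

/-- With `T(x₁,x₂,…) = (0, αx₁, x₂, …)` on `ℓ²` (`α ∈ (0,1)`, coordinates
indexed from `0`), `P = T²`, `S₁ = (n-2)I + 2T`, `S_{n-1} = 2T + (n-2)T²` for an integer
`n ≥ 3`, and with
`B₁ x = ((n-2)x₁ + 2αx₂, (n-2)x₂ + 2√(1-α²)x₃, (n-2)x₃, 0, 0, …)` and
`B_{n-1} x = (2αx₂, 2√(1-α²)x₃, 0, 0, …)`, one has
`S₁* - S_{n-1} P* = D_{P*} B₁ D_{P*}` and `S_{n-1}* - S₁ P* = D_{P*} B_{n-1} D_{P*}`. -/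
theorem stmt12 (α : ℝ) (hα : 0 < α) (hα1 : α < 1)
    (T : ℓ² →L[ℂ] ℓ²)
    (hT : ∀ x : ℓ², (T x) 0 = 0 ∧ (T x) 1 = (α : ℂ) * x 0 ∧ ∀ k : ℕ, (T x) (k + 2) = x (k + 1))
    (n : ℕ) (hn : 3 ≤ n)
    (S₁ : ℓ² →L[ℂ] ℓ²) (hS₁ : S₁ = ((n : ℂ) - 2) • (1 : ℓ² →L[ℂ] ℓ²) + (2 : ℂ) • T)
    (Sn₁ : ℓ² →L[ℂ] ℓ²) (hSn₁ : Sn₁ = (2 : ℂ) • T + ((n : ℂ) - 2) • (T * T))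
    (P : ℓ² →L[ℂ] ℓ²) (hP : P = T * T)
    (DPs : ℓ² →L[ℂ] ℓ²) (hDPspos : DPs.IsPositive)
    (hDPssq : DPs * DPs = 1 - P * adjoint P)
    (B₁ : ℓ² →L[ℂ] ℓ²)
    (hB₁ : ∀ x : ℓ²,
      (B₁ x) 0 = ((n : ℂ) - 2) * x 0 + 2 * (α : ℂ) * x 1 ∧
      (B₁ x) 1 = ((n : ℂ) - 2) * x 1 + 2 * (Real.sqrt (1 - α ^ 2) : ℂ) * x 2 ∧
      (B₁ x) 2 = ((n : ℂ) - 2) * x 2 ∧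
      ∀ k : ℕ, 3 ≤ k → (B₁ x) k = 0)
    (Bn₁ : ℓ² →L[ℂ] ℓ²)
    (hBn₁ : ∀ x : ℓ²,
      (Bn₁ x) 0 = 2 * (α : ℂ) * x 1 ∧
      (Bn₁ x) 1 = 2 * (Real.sqrt (1 - α ^ 2) : ℂ) * x 2 ∧
      ∀ k : ℕ, 2 ≤ k → (Bn₁ x) k = 0) :
    adjoint S₁ - Sn₁ * adjoint P = DPs * B₁ * DPs ∧
    adjoint Sn₁ - S₁ * adjoint P = DPs * Bn₁ * DPs := by
  have hA : ∀ x : ℓ², (adjoint T x) 0 = (α : ℂ) * x 1 ∧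
      ∀ k : ℕ, (adjoint T x) (k + 1) = x (k + 2) := by
    intro x
    constructor
    · have e : T (lp.single 2 0 (1 : ℂ)) = (α : ℂ) • lp.single 2 1 (1 : ℂ) := by
        ext j
        obtain ⟨h0, h1, h2⟩ := hT (lp.single 2 0 (1 : ℂ))
        rcases j with _ | _ | j
        · rw [h0]; simp [aux_single, aux_smul, -lp.single_apply, -Complex.coe_smul, -lp.coeFn_smul]
        · rw [h1]; simp [aux_single, aux_smul, -lp.single_apply, -Complex.coe_smul, -lp.coeFn_smul]
        · rw [h2]; simp [aux_single, aux_smul, -lp.single_apply, -Complex.coe_smul, -lp.coeFn_smul]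
      rw [← aux_coord, adjoint_inner_right, e, inner_smul_left, aux_coord]; simp
    · intro k
      have e : T (lp.single 2 (k + 1) (1 : ℂ)) = lp.single 2 (k + 2) (1 : ℂ) := by
        ext j
        obtain ⟨h0, h1, h2⟩ := hT (lp.single 2 (k + 1) (1 : ℂ))
        rcases j with _ | _ | j
        · rw [h0]; simp [aux_single, aux_smul, -lp.single_apply, -Complex.coe_smul, -lp.coeFn_smul]
        · rw [h1]; simp [aux_single, aux_smul, -lp.single_apply, -Complex.coe_smul, -lp.coeFn_smul]
        · rw [h2]; simp [aux_single, aux_smul, -lp.single_apply, -Complex.coe_smul, -lp.coeFn_smul]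
      rw [← aux_coord, adjoint_inner_right, e, aux_coord]
  have hPa : adjoint P = adjoint T * adjoint T := by
    rw [hP]; exact adjoint_comp T T
  have T0 : ∀ x : ℓ², (T x) 0 = 0 := fun x => (hT x).1
  have T1 : ∀ x : ℓ², (T x) 1 = (α : ℂ) * x 0 := fun x => (hT x).2.1
  have T2 : ∀ (x : ℓ²) (k : ℕ), (T x) (k + 2) = x (k + 1) := fun x => (hT x).2.2
  have A0 : ∀ x : ℓ², (adjoint T x) 0 = (α : ℂ) * x 1 := fun x => (hA x).1
  have A1 : ∀ (x : ℓ²) (k : ℕ), (adjoint T x) (k + 1) = x (k + 2) := fun x => (hA x).2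
  have A1' : ∀ (x : ℓ²), (adjoint T x) 1 = x 2 := fun x => A1 x 0
  have T2' : ∀ (x : ℓ²), (T x) 2 = x 1 := fun x => T2 x 0
  have s0 : 0 ≤ Real.sqrt (1 - α ^ 2) := Real.sqrt_nonneg _
  have s2 : (Real.sqrt (1 - α ^ 2) : ℂ) ^ 2 = 1 - (α : ℂ) ^ 2 := by
    have : Real.sqrt (1 - α ^ 2) ^ 2 = 1 - α ^ 2 := Real.sq_sqrt (by nlinarith)
    exact_mod_cast this
  set s : ℝ := Real.sqrt (1 - α ^ 2) with hs
  have hDD : ∀ x : ℓ², DPs (DPs x) = x - T (T (adjoint T (adjoint T x))) := by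
    intro x
    have := congrArg (fun F : ℓ² →L[ℂ] ℓ² => F x) hDPssq
    rw [hPa, hP] at this
    simpa using this
  have hsym : ∀ x y : ℓ², inner ℂ (DPs x) y = inner ℂ x (DPs y) :=
    fun x y => hDPspos.isSymmetric x y
  have key : ∀ (k : ℕ) (c : ℝ), 0 ≤ c →
      DPs (DPs (lp.single 2 k (1 : ℂ))) = ((c : ℂ) ^ 2) • lp.single 2 k (1 : ℂ) →
      ∀ x : ℓ², (DPs x) k = c * x k := by
    intro k c hc h x
    rw [← aux_coord, ← hsym, aux_sqrt_eig DPs hDPspos c hc _ h, inner_smul_left, aux_coord]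
    simp
  have D0 : ∀ x : ℓ², (DPs x) 0 = x 0 := by
    have := key 0 1 zero_le_one (by
      rw [hDD]; ext j
      rcases j with _ | _ | _ | j <;> simp [T0, T1, T2, T2', A0, A1, A1', aux_single, aux_sub, aux_smul, -lp.coeFn_sub,
        -lp.coeFn_smul, -lp.single_apply, -Complex.coe_smul])
    simpa using this
  have D1 : ∀ x : ℓ², (DPs x) 1 = x 1 := by
    have := key 1 1 zero_le_one (by
      rw [hDD]; ext j
      rcases j with _ | _ | _ | j <;> simp [T0, T1, T2, T2', A0, A1, A1', aux_single, aux_sub, aux_smul, -lp.coeFn_sub,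
        -lp.coeFn_smul, -lp.single_apply, -Complex.coe_smul])
    simpa using this
  have D2 : ∀ x : ℓ², (DPs x) 2 = s * x 2 := by
    refine key 2 s s0 ?_
    rw [hDD, s2]; ext j
    rcases j with _ | _ | _ | j <;> simp [T0, T1, T2, T2', A0, A1, A1', aux_single, aux_sub, aux_smul, -lp.coeFn_sub,
        -lp.coeFn_smul, -lp.single_apply, -Complex.coe_smul]
    ring
  have D3 : ∀ (x : ℓ²) (k : ℕ), (DPs x) (k + 3) = 0 := by
    intro x k
    have := key (k + 3) 0 le_rfl (by
      rw [hDD]; ext j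
      rcases j with _ | _ | _ | j <;> simp [T0, T1, T2, T2', A0, A1, A1', aux_single, aux_sub, aux_smul, -lp.coeFn_sub,
        -lp.coeFn_smul, -lp.single_apply, -Complex.coe_smul]) x
    simpa using this
  have b0 := fun x => (hB₁ x).1
  have b1 := fun x => (hB₁ x).2.1
  have b2 := fun x => (hB₁ x).2.2.1
  have c0 := fun x => (hBn₁ x).1
  have c1 := fun x => (hBn₁ x).2.1
  have c2 := fun x => (hBn₁ x).2.2 2 le_rfl
  have aS : adjoint S₁ = ((n : ℂ) - 2) • (1 : ℓ² →L[ℂ] ℓ²) + (2 : ℂ) • adjoint T := by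
    rw [hS₁, ← star_eq_adjoint, ← star_eq_adjoint]; simp
  have aSn : adjoint Sn₁ = (2 : ℂ) • adjoint T + ((n : ℂ) - 2) • (adjoint T * adjoint T) := by
    rw [hSn₁, ← star_eq_adjoint, ← star_eq_adjoint]; simp
  constructor
  · rw [aS, hPa, hSn₁]
    ext x j
    rcases j with _ | _ | _ | j <;>
      simp [T0, T1, T2, T2', A0, A1, A1', aux_add, aux_sub, aux_smul, -lp.coeFn_add, -lp.coeFn_sub,
        -lp.coeFn_smul, D0, D1, D2, D3, b0, b1, b2]
    · ring
    · linear_combination (-2 * x 2) * s2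
    · linear_combination (-((n : ℂ) - 2) * x 2) * s2
    · ring
  · rw [aSn, hPa, hS₁]
    ext x j
    rcases j with _ | _ | _ | j <;>
      simp [T0, T1, T2, T2', A0, A1, A1', aux_add, aux_sub, aux_smul, -lp.coeFn_add, -lp.coeFn_sub,
        -lp.coeFn_smul, D0, D1, D2, D3, c0, c1, c2]
    · ring
    · linear_combination (-2 * x 2) * s2
    · ring
    · ring
end

section
/- Let $T$ on $\ell^2$ be given by $T(x_1,x_2,\dots)=(0,\alpha x_1,x_2,\dots)$, $\alpha\in(0,1)$, $P=T^2$, $S_1=(n-2)I+2T$ for an integer $n\ge 3$, and let $\mathcal{A}$ be the strong limit of $P^{*k}P^k$. Then $D_{P^*}S_1\mathcal{A} \ne D_{P^*}\mathcal{A}S_1$; explicitly, for $x=(x_1,x_2,\dots)\in\ell^2$, $D_{P^*}S_1\mathcal{A}x = (n-2)(\alpha^2 x_1, x_2, \sqrt{1-\alpha^2}x_3,0,\dots) + 2(0, \alpha^3 x_1, \sqrt{1-\alpha^2}x_2, 0,\dots)$ while $D_{P^*}\mathcal{A}S_1 x = (n-2)(\alpha^2 x_1, x_2, \sqrt{1-\alpha^2}x_3,0,\dots)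 + 2(0, \alpha x_1, \sqrt{1-\alpha^2}x_2, 0,\dots)$. -/
open ContinuousLinearMap Filter

local notation "ℓ²" => lp (fun _ : ℕ => ℂ) 2


theorem aux_sqrt (D : ℓ² →L[ℂ] ℓ²) (hD : D.IsPositive) (c : ℝ) (hc : 0 ≤ c) (v : ℓ²)
    (hv : D (D v) = ((c : ℂ) ^ 2) • v) : D v = (c : ℂ) • v := by
  have hsym : ∀ x y : ℓ², inner ℂ (D x) y = inner ℂ x (D y) := hD.isSymmetric
  rcases hc.eq_or_lt with rfl | hc
  · have h1 : inner ℂ (D v) (D v) = 0 := by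
      rw [hsym, hv]; simp
    simpa using h1
  · have hw : D (D v - (c : ℂ) • v) = -((c : ℂ) • (D v - (c : ℂ) • v)) := by
      rw [map_sub, map_smul, hv]; module
    have h2 := hD.re_inner_nonneg_left (D v - (c : ℂ) • v)
    rw [hw, inner_neg_left, inner_smul_left, inner_self_eq_norm_sq_to_K] at h2
    have h3 : 0 ≤ -(c * ‖D v - (c : ℂ) • v‖ ^ 2) := by
      have e : RCLike.re (-((starRingEnd ℂ) (c : ℂ) * ((‖D v - (c : ℂ) • v‖ : ℂ)) ^ 2))
          = -(c * ‖D v - (c : ℂ) • v‖ ^ 2) := by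
        rw [Complex.conj_ofReal, ← Complex.ofReal_pow, ← Complex.ofReal_mul, ← Complex.ofReal_neg]
        exact Complex.ofReal_re _
      exact e ▸ h2
    have h4 : ‖D v - (c : ℂ) • v‖ ^ 2 = 0 := by
      have := sq_nonneg ‖D v - (c : ℂ) • v‖
      nlinarith
    have h5 : D v - (c : ℂ) • v = 0 := by simpa using h4
    exact sub_eq_zero.mp h5

theorem aux_coord_s13 (k : ℕ) (y : ℓ²) : y k = inner ℂ (lp.single 2 k (1 : ℂ) : ℓ²) y := by
  rw [lp.inner_single_left]; simp

/-- With `T(x₁,x₂,…) = (0, αx₁, x₂, …)` on `ℓ²` (`α ∈ (0,1)`, coordinates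
indexed from `0`), `P = T²`, `S₁ = (n-2)I + 2T` for an integer `n ≥ 3`, and `𝒜` the strong
limit of `P*ᵏPᵏ`, one has `D_{P*} S₁ 𝒜 ≠ D_{P*} 𝒜 S₁`; explicitly
`D_{P*}S₁𝒜 x = (n-2)(α²x₁, x₂, √(1-α²)x₃, 0, …) + 2(0, α³x₁, √(1-α²)x₂, 0, …)` while
`D_{P*}𝒜S₁ x = (n-2)(α²x₁, x₂, √(1-α²)x₃, 0, …) + 2(0, αx₁, √(1-α²)x₂, 0, …)`. -/
theorem stmt13 (α : ℝ) (hα : 0 < α) (hα1 : α < 1)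
    (T : ℓ² →L[ℂ] ℓ²)
    (hT : ∀ x : ℓ², (T x) 0 = 0 ∧ (T x) 1 = (α : ℂ) * x 0 ∧ ∀ k : ℕ, (T x) (k + 2) = x (k + 1))
    (n : ℕ) (hn : 3 ≤ n)
    (S₁ : ℓ² →L[ℂ] ℓ²) (hS₁ : S₁ = ((n : ℂ) - 2) • (1 : ℓ² →L[ℂ] ℓ²) + (2 : ℂ) • T)
    (P : ℓ² →L[ℂ] ℓ²) (hP : P = T * T)
    (A : ℓ² →L[ℂ] ℓ²)
    (hA : ∀ x : ℓ²,
      Tendsto (fun k : ℕ => ((adjoint P) ^ k * P ^ k) x) atTop (nhds (A x)))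
    (DPs : ℓ² →L[ℂ] ℓ²) (hDPspos : DPs.IsPositive)
    (hDPssq : DPs * DPs = 1 - P * adjoint P) :
    DPs * S₁ * A ≠ DPs * A * S₁ ∧
    (∀ x : ℓ²,
      (DPs (S₁ (A x))) 0 = ((n : ℂ) - 2) * (α : ℂ) ^ 2 * x 0 ∧
      (DPs (S₁ (A x))) 1 = ((n : ℂ) - 2) * x 1 + 2 * (α : ℂ) ^ 3 * x 0 ∧
      (DPs (S₁ (A x))) 2 = ((n : ℂ) - 2) * (Real.sqrt (1 - α ^ 2) : ℂ) * x 2 +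
        2 * (Real.sqrt (1 - α ^ 2) : ℂ) * x 1 ∧
      (∀ k : ℕ, 3 ≤ k → (DPs (S₁ (A x))) k = 0)) ∧
    (∀ x : ℓ²,
      (DPs (A (S₁ x))) 0 = ((n : ℂ) - 2) * (α : ℂ) ^ 2 * x 0 ∧
      (DPs (A (S₁ x))) 1 = ((n : ℂ) - 2) * x 1 + 2 * (α : ℂ) * x 0 ∧
      (DPs (A (S₁ x))) 2 = ((n : ℂ) - 2) * (Real.sqrt (1 - α ^ 2) : ℂ) * x 2 +
        2 * (Real.sqrt (1 - α ^ 2) : ℂ) * x 1 ∧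
      (∀ k : ℕ, 3 ≤ k → (DPs (A (S₁ x))) k = 0)) := by
  have hP0 : ∀ x : ℓ², (P x) 0 = 0 := fun x => by
    rw [hP]; exact (hT _).1
  have hP1 : ∀ x : ℓ², (P x) 1 = 0 := fun x => by
    rw [hP, mul_apply_eq_comp, (hT _).2.1, (hT _).1, mul_zero]
  have hP2 : ∀ x : ℓ², (P x) 2 = α * x 0 := fun x => by
    rw [hP, mul_apply_eq_comp, (hT _).2.2 0, (hT _).2.1]
  have hP3 : ∀ (x : ℓ²) (k : ℕ), (P x) (k + 3) = x (k + 1) := fun x k => by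
    rw [hP, mul_apply_eq_comp, (hT _).2.2 (k + 1), (hT _).2.2 k]
  have hPe0 : P (lp.single 2 0 (1 : ℂ)) = (α : ℂ) • (lp.single 2 2 (1 : ℂ) : ℓ²) := by
    ext j
    rw [lp.coeFn_smul, Pi.smul_apply]
    rcases j with _ | _ | _ | j
    · simp [hP0]
    · simp [hP1]
    · simp [hP2]
    · simp [hP3]
  have hPe : ∀ k : ℕ, P (lp.single 2 (k + 1) (1 : ℂ)) = (lp.single 2 (k + 3) (1 : ℂ) : ℓ²) := by
    intro k
    ext j
    rcases j with _ | _ | _ | j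
    · simp [hP0]
    · simp [hP1]
    · simp [hP2]
    · simp [hP3, Pi.single_apply]
  have hQ0 : ∀ y : ℓ², (adjoint P y) 0 = α * y 2 := fun y => by
    rw [aux_coord_s13, adjoint_inner_right, hPe0, inner_smul_left, ← aux_coord_s13]; simp
  have hQ1 : ∀ (y : ℓ²) (k : ℕ), (adjoint P y) (k + 1) = y (k + 3) := fun y k => by
    rw [aux_coord_s13, adjoint_inner_right, hPe, ← aux_coord_s13]
  -- the asymptotic limit
  have hpow : ∀ (k : ℕ) (x : ℓ²), (((adjoint P) ^ (k + 1) * P ^ (k + 1)) x) 0 = (α : ℂ) ^ 2 * x 0 ∧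
      ∀ j : ℕ, (((adjoint P) ^ (k + 1) * P ^ (k + 1)) x) (j + 1) = x (j + 1) := by
    intro k
    induction k with
    | zero =>
      intro x
      refine ⟨?_, fun j => ?_⟩
      · simp only [zero_add, pow_one, mul_apply_eq_comp]
        rw [hQ0, hP2]; ring
      · simp only [zero_add, pow_one, mul_apply_eq_comp]
        rw [hQ1, hP3]
    | succ k ih =>
      intro x
      have e : ((adjoint P) ^ (k + 1 + 1) * P ^ (k + 1 + 1)) x
          = adjoint P (((adjoint P) ^ (k + 1) * P ^ (k + 1)) (P x)) := by
        rw [pow_succ' (adjoint P), pow_succ P (k + 1)]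
        rfl
      rw [e]
      refine ⟨?_, fun j => ?_⟩
      · rw [hQ0, (ih (P x)).2 1, hP2]; ring
      · rw [hQ1, (ih (P x)).2 (j + 2), hP3]
  have hlim : ∀ (x : ℓ²) (j : ℕ) (c : ℂ),
      (∀ k, (((adjoint P) ^ (k + 1) * P ^ (k + 1)) x) j = c) → (A x) j = c := by
    intro x j c h
    have h1 := ((tendsto_add_atTop_iff_nat 1).2 (hA x))
    have h2 : Tendsto (fun k : ℕ => inner ℂ (lp.single 2 j (1 : ℂ) : ℓ²)
        (((adjoint P) ^ (k + 1) * P ^ (k + 1)) x)) atTop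
        (nhds (inner ℂ (lp.single 2 j (1 : ℂ) : ℓ²) (A x))) :=
      tendsto_const_nhds.inner h1
    simp only [← aux_coord_s13, h] at h2
    exact tendsto_nhds_unique h2 tendsto_const_nhds
  have hA0 : ∀ x : ℓ², (A x) 0 = (α : ℂ) ^ 2 * x 0 := fun x =>
    hlim x 0 _ fun k => (hpow k x).1
  have hA1 : ∀ (x : ℓ²) (j : ℕ), (A x) (j + 1) = x (j + 1) := fun x j =>
    hlim x _ _ fun k => (hpow k x).2 j
  -- the defect operator
  have hDD : ∀ v : ℓ², DPs (DPs v) = v - P (adjoint P v) := fun v => by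
    have := congrArg (fun F : ℓ² →L[ℂ] ℓ² => F v) hDPssq
    exact this
  have hpos : 0 ≤ 1 - α ^ 2 := by nlinarith
  have hsq : ((Real.sqrt (1 - α ^ 2) : ℝ) : ℂ) ^ 2 = 1 - (α : ℂ) ^ 2 := by
    rw [← Complex.ofReal_pow, Real.sq_sqrt hpos]; push_cast; ring
  have hDk : ∀ (k : ℕ) (c : ℝ), 0 ≤ c →
      DPs (DPs (lp.single 2 k (1 : ℂ))) = ((c : ℂ) ^ 2) • (lp.single 2 k (1 : ℂ) : ℓ²) →
      ∀ x : ℓ², (DPs x) k = c * x k := by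
    intro k c hc h x
    have hs : inner ℂ (DPs (lp.single 2 k (1 : ℂ))) x
        = inner ℂ (lp.single 2 k (1 : ℂ) : ℓ²) (DPs x) := hDPspos.isSymmetric _ _
    rw [aux_coord_s13, ← hs, aux_sqrt DPs hDPspos c hc _ h, inner_smul_left, ← aux_coord_s13]
    simp
  have hD0 : ∀ x : ℓ², (DPs x) 0 = x 0 := by
    intro x
    rw [hDk 0 1 zero_le_one ?_ x]
    · simp
    rw [hDD]
    ext j
    rcases j with _ | _ | _ | j
    · simp [hP0]
    · simp [hP1]
    · simp [hP2, hQ0]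
    · simp [hP3, hQ1]
  have hD1 : ∀ x : ℓ², (DPs x) 1 = x 1 := by
    intro x
    rw [hDk 1 1 zero_le_one ?_ x]
    · simp
    rw [hDD]
    ext j
    rcases j with _ | _ | _ | j
    · simp [hP0]
    · simp [hP1]
    · simp [hP2, hQ0]
    · simp [hP3, hQ1]
  have hD2 : ∀ x : ℓ², (DPs x) 2 = (Real.sqrt (1 - α ^ 2) : ℂ) * x 2 := by
    intro x
    rw [hDk 2 _ (Real.sqrt_nonneg (1 - α ^ 2)) ?_ x]
    rw [hDD, hsq]
    ext j
    rcases j with _ | _ | _ | j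
    · simp [hP0]
    · simp [hP1]
    · simp [hP2, hQ0]; ring
    · simp [hP3, hQ1]
  have hD3 : ∀ (x : ℓ²) (k : ℕ), (DPs x) (k + 3) = 0 := by
    intro x k
    rw [hDk (k + 3) 0 le_rfl ?_ x]
    · simp
    rw [hDD]
    ext j
    rcases j with _ | _ | _ | j
    · simp [hP0]
    · simp [hP1]
    · simp [hP2, hQ0]
    · simp [hP3, hQ1]
  have hS : ∀ (x : ℓ²) (j : ℕ), (S₁ x) j = ((n : ℂ) - 2) * x j + 2 * (T x) j := by
    intro x j
    rw [hS₁]; rfl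
  have key1 : ∀ x : ℓ², (DPs (S₁ (A x))) 1 = ((n : ℂ) - 2) * x 1 + 2 * (α : ℂ) ^ 3 * x 0 := by
    intro x
    rw [hD1, hS, (hT _).2.1, hA0, hA1 x 0]; ring
  have key2 : ∀ x : ℓ², (DPs (A (S₁ x))) 1 = ((n : ℂ) - 2) * x 1 + 2 * (α : ℂ) * x 0 := by
    intro x
    rw [hD1, hA1 _ 0, hS, (hT _).2.1]; ring
  refine ⟨?_, fun x => ⟨?_, key1 x, ?_, ?_⟩, fun x => ⟨?_, key2 x, ?_, ?_⟩⟩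
  · intro h
    have h1 : DPs (S₁ (A (lp.single 2 0 (1 : ℂ)))) = DPs (A (S₁ (lp.single 2 0 (1 : ℂ)))) :=
      congrArg (fun F : ℓ² →L[ℂ] ℓ² => F (lp.single 2 0 (1 : ℂ))) h
    have h2 := key1 (lp.single 2 0 (1 : ℂ))
    rw [h1, key2] at h2
    have h3 : (α : ℂ) = (α : ℂ) ^ 3 := by simpa using h2
    have h4 : α = α ^ 3 := by exact_mod_cast h3
    have h5 : α * (1 - α) * (1 + α) = 0 := by linear_combination h4
    have h6 : 0 < α * (1 - α) * (1 + α) :=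
      mul_pos (mul_pos hα (by linarith)) (by linarith)
    linarith
  · rw [hD0, hS, (hT _).1, hA0]; ring
  · rw [hD2, hS, (hT _).2.2 0, hA1 x 1, hA1 x 0]; ring
  · intro k hk
    obtain ⟨m, rfl⟩ := Nat.exists_eq_add_of_le' hk
    exact hD3 _ m
  · rw [hD0, hA0, hS, (hT _).1]; ring
  · rw [hD2, hA1 _ 1, hS, (hT _).2.2 0]; ring
  · intro k hk
    obtain ⟨m, rfl⟩ := Nat.exists_eq_add_of_le' hk
    exact hD3 _ m
end
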